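/- arXiv:2304.08845 — 2 statements merged into one kernel-verified Lean document; each statement's English description precedes it below -/
import Mathlib

section
/- For every policy π, the constraint decay operator D^π, defined on functions F : 𝒳 → [0,1] by (D^π F)(x) = c(x) + (1 − c(x))·γ·F(f(x, π(x))), satisfies d_∞(D^π F_1, D^π F_2) ≤ γ·d_∞(F_1, F_2) for all F_1, F_2 : 𝒳 → [0,1]; consequently D^π has a unique fixed point among functions 𝒳 → [0,1], and this unique fixed point is the constraint decay function F^π. -/
/-!
The indicator `c` takes only the values `0` and `1`, so `D^π F₁ - D^π F₂` is at each point either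
`0` or `γ` times the difference `F₁ - F₂` at the successor state; this gives the contraction bound.
That `F^π` is fixed by `D^π` is a one-step analysis: a violated constraint at `x` means hitting
time `0`, and otherwise the hitting time from `x` is one more than the one from the successor
(`Fcdf_of_nonpos`). Uniqueness follows from the contraction bound: the sup distance `d` between two
`[0,1]`-valued fixed points satisfies `d ≤ γ d` with `γ < 1`, hence `d ≤ 0`.
-/

open scoped Classical

variable {X U : Type*}

/-- Trajectory from `x` under policy `π`: `x₀ = x`, `x_{t+1} = f xₜ (π xₜ)`. -/
def traj (f : X → U → X) (π : X → U) (x : X) : ℕ → X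
  | 0 => x
  | t + 1 => f (traj f π x t) (π (traj f π x t))

/-- Constraint indicator: `c(x) = 1` if `h x > 0`, else `0`. -/
noncomputable def cInd (h : X → ℝ) (x : X) : ℝ := if h x > 0 then 1 else 0

/-- Constraint decay function `F^π(x) = γ ^ (N^π x)` with `γ ^ ∞ := 0`,
where `N^π x` is the least `t` with `h (xₜ) > 0` along the trajectory. -/
noncomputable def Fcdf (f : X → U → X) (h : X → ℝ) (γ : ℝ) (π : X → U) (x : X) : ℝ :=
  if hx : ∃ t, h (traj f π x t) > 0 then γ ^ Nat.find hx else 0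

/-- Feasible region of a policy `π`. -/
def Xfeas (f : X → U → X) (h : X → ℝ) (π : X → U) : Set X :=
  {x | ∀ t, h (traj f π x t) ≤ 0}

/-- Maximum feasible region. -/
def Xstar (f : X → U → X) (h : X → ℝ) : Set X :=
  {x | ∃ π : X → U, x ∈ Xfeas f h π}

/-- Optimal constraint decay function: infimum of `F^π` over all policies. -/
noncomputable def Fstar (f : X → U → X) (h : X → ℝ) (γ : ℝ) (x : X) : ℝ :=
  ⨅ π : X → U, Fcdf f h γ π x

/-- State-value function of a policy. -/
noncomputable def Vval (f : X → U → X) (r : X → U → ℝ) (γ : ℝ) (π : X → U) (x : X) : ℝ :=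
  ∑' t : ℕ, γ ^ t * r (traj f π x t) (π (traj f π x t))

/-- Optimal state-value function: max of `V^π` over policies whose feasible
region equals the maximum feasible region. -/
noncomputable def Vstar (f : X → U → X) (h : X → ℝ) (r : X → U → ℝ) (γ : ℝ) (x : X) : ℝ :=
  ⨆ π : {π : X → U // Xfeas f h π = Xstar f h}, Vval f r γ π.1 x

/-- The constraint decay operator `D^π`. -/
noncomputable def Dop (f : X → U → X) (h : X → ℝ) (γ : ℝ) (π : X → U)
    (F : X → ℝ) (x : X) : ℝ :=
  cInd h x + (1 - cInd h x) * γ * F (f x (π x))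

/-- Running the policy one step first and then `t` steps is running it `t + 1` steps. -/
theorem traj_succ' (f : X → U → X) (π : X → U) (x : X) (t : ℕ) :
    traj f π x (t + 1) = traj f π (f x (π x)) t := by
  induction t with
  | zero => rfl
  | succ t ih => rw [traj, ih, traj]

theorem Fcdf_of_pos (f : X → U → X) (h : X → ℝ) (γ : ℝ) (π : X → U) {x : X} (hx : 0 < h x) :
    Fcdf f h γ π x = 1 := by
  have hex : ∃ t, h (traj f π x t) > 0 := ⟨0, hx⟩
  rw [Fcdf, dif_pos hex, (Nat.find_eq_zero hex).2 hx, pow_zero]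

/-- From a state satisfying the constraint, the first violation comes one step later than from the
successor state, if it comes at all. -/
theorem Fcdf_of_nonpos (f : X → U → X) (h : X → ℝ) (γ : ℝ) (π : X → U) {x : X} (hx : h x ≤ 0) :
    Fcdf f h γ π x = γ * Fcdf f h γ π (f x (π x)) := by
  unfold Fcdf
  by_cases h₂ : ∃ t, h (traj f π (f x (π x)) t) > 0
  · have h₂' : ∃ t, h (traj f π x (t + 1)) > 0 := by simpa only [traj_succ'] using h₂
    have h₁ : ∃ t, h (traj f π x t) > 0 := h₂'.imp' (· + 1) fun _ ht => ht
    have key := Nat.find_comp_succ h₁ h₂' (not_lt.2 hx)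
    simp only [traj_succ'] at key
    rw [dif_pos h₁, dif_pos h₂, key, pow_succ']
  · have h₁ : ¬ ∃ t, h (traj f π x t) > 0 := by
      rintro ⟨_ | t, ht⟩
      · exact absurd ht (not_lt.2 hx)
      · exact h₂ ⟨t, by rwa [traj_succ'] at ht⟩
    rw [dif_neg h₁, dif_neg h₂, mul_zero]

theorem Fcdf_mem_Icc (f : X → U → X) (h : X → ℝ) {γ : ℝ} (hγ0 : 0 < γ) (hγ1 : γ < 1)
    (π : X → U) (x : X) : Fcdf f h γ π x ∈ Set.Icc (0 : ℝ) 1 := by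
  unfold Fcdf
  split_ifs
  · exact ⟨by positivity, pow_le_one₀ hγ0.le hγ1.le⟩
  · simp

theorem Dop_Fcdf (f : X → U → X) (h : X → ℝ) (γ : ℝ) (π : X → U) :
    Dop f h γ π (Fcdf f h γ π) = Fcdf f h γ π := by
  funext x
  rcases lt_or_ge 0 (h x) with hx | hx
  · simp [Dop, cInd, hx, Fcdf_of_pos f h γ π hx]
  · rw [Fcdf_of_nonpos f h γ π hx]
    simp [Dop, cInd, hx.not_gt]

/-- Real suprema of unbounded families are `0`, so boundedness of `|F₁ - F₂|` is needed to bound its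
values by the sup distance. -/
theorem bddAbove_abs_sub {F₁ F₂ : X → ℝ} (h₁ : ∀ x, F₁ x ∈ Set.Icc (0 : ℝ) 1)
    (h₂ : ∀ x, F₂ x ∈ Set.Icc (0 : ℝ) 1) : BddAbove (Set.range fun x => |F₁ x - F₂ x|) := by
  refine ⟨1, ?_⟩
  rintro _ ⟨x, rfl⟩
  have a := h₁ x
  have b := h₂ x
  exact abs_le.2 ⟨by linarith [a.1, b.2], by linarith [a.2, b.1]⟩

theorem Dop_contraction (f : X → U → X) (h : X → ℝ) {γ : ℝ} (hγ0 : 0 < γ) (π : X → U)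
    {F₁ F₂ : X → ℝ} (h₁ : ∀ x, F₁ x ∈ Set.Icc (0 : ℝ) 1) (h₂ : ∀ x, F₂ x ∈ Set.Icc (0 : ℝ) 1) :
    (⨆ x : X, |Dop f h γ π F₁ x - Dop f h γ π F₂ x|) ≤ γ * ⨆ x : X, |F₁ x - F₂ x| := by
  have hS : 0 ≤ γ * ⨆ x : X, |F₁ x - F₂ x| :=
    mul_nonneg hγ0.le (Real.iSup_nonneg fun _ => abs_nonneg _)
  refine Real.iSup_le (fun x => ?_) hS
  rcases lt_or_ge 0 (h x) with hx | hx
  · simpa [Dop, cInd, hx] using hS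
  · have e : Dop f h γ π F₁ x - Dop f h γ π F₂ x = γ * (F₁ (f x (π x)) - F₂ (f x (π x))) := by
      simp [Dop, cInd, hx.not_gt, mul_sub]
    rw [e, abs_mul, abs_of_pos hγ0]
    exact mul_le_mul_of_nonneg_left (le_ciSup (bddAbove_abs_sub h₁ h₂) (f x (π x))) hγ0.le

/-- `D^π` is a `γ`-contraction in the sup metric on functions
`X → [0,1]`, and its unique fixed point among such functions is `F^π`. -/
theorem constraint_decay_operator_contraction (f : X → U → X) (h : X → ℝ) (γ : ℝ)
    (hγ0 : 0 < γ) (hγ1 : γ < 1) (π : X → U) :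
    (∀ F₁ F₂ : X → ℝ, (∀ x, F₁ x ∈ Set.Icc (0:ℝ) 1) → (∀ x, F₂ x ∈ Set.Icc (0:ℝ) 1) →
      (⨆ x : X, |Dop f h γ π F₁ x - Dop f h γ π F₂ x|) ≤ γ * ⨆ x : X, |F₁ x - F₂ x|) ∧
    (∀ x : X, Fcdf f h γ π x ∈ Set.Icc (0:ℝ) 1) ∧
    Dop f h γ π (Fcdf f h γ π) = Fcdf f h γ π ∧
    (∀ F : X → ℝ, (∀ x, F x ∈ Set.Icc (0:ℝ) 1) → Dop f h γ π F = F →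
      F = Fcdf f h γ π) := by
  refine ⟨fun F₁ F₂ h₁ h₂ => Dop_contraction f h hγ0 π h₁ h₂, Fcdf_mem_Icc f h hγ0 hγ1 π,
    Dop_Fcdf f h γ π, fun F hF hfix => ?_⟩
  have hG := Fcdf_mem_Icc f h hγ0 hγ1 π
  have hc := Dop_contraction f h hγ0 π hF hG
  rw [hfix, Dop_Fcdf] at hc
  have hS : (⨆ x : X, |F x - Fcdf f h γ π x|) ≤ 0 := by nlinarith
  funext x
  have hx := (le_ciSup (bddAbove_abs_sub hF hG) x).trans hS
  exact sub_eq_zero.1 (abs_nonpos_iff.1 hx)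
end

section
/- (Risky Bellman equation, necessary and sufficient) A function F : 𝒳 → [0,1] satisfies the risky Bellman equation F(x) = c(x) + (1 − c(x))·γ·inf_{u∈𝒰} F(f(x, u)) for all x ∈ 𝒳 if and only if F equals the optimal constraint decay function F*. -/
/-!
The optimal CDF `F*` solves the risky Bellman equation, and the equation has at most one solution
with values in `[0, 1]`.

Uniqueness is the contraction argument: two solutions differ pointwise by at most `γ ^ n` for
every `n`.

For existence, each `F^π` satisfies its own recursion (`Fcdf_of_pos`, `Fcdf_of_nonpos`), which
gives `γ * inf_u F*(f x u) ≤ F*(x)` at safe `x`. The converse inequality requires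
`F*(x) ≤ γ * F^π(f x u)` for each action `u` and each policy `π`. As policies are stationary, one
cannot simply play `u` first and follow `π` afterwards, since the trajectory may return to `x`.
Instead, policy improvement (`Fcdf_le_of_super`) is used: either
`F^π(x) ≤ γ * F^π(f x u)` already, or changing `π` at the single state `x` to `u` makes `F^π` a
supersolution of the recursion for the new policy, hence an upper bound for its CDF.
-/

open scoped Classical

variable {X U : Type*}

theorem Fcdf_nonneg (f : X → U → X) (h : X → ℝ) {γ : ℝ} (hγ0 : 0 < γ) (π : X → U) (x : X) :
    0 ≤ Fcdf f h γ π x := by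
  unfold Fcdf
  split_ifs <;> positivity

theorem Fcdf_le_one (f : X → U → X) (h : X → ℝ) {γ : ℝ} (hγ0 : 0 < γ) (hγ1 : γ < 1)
    (π : X → U) (x : X) : Fcdf f h γ π x ≤ 1 := by
  unfold Fcdf
  split_ifs
  · exact pow_le_one₀ hγ0.le hγ1.le
  · exact zero_le_one

/-- A nonnegative supersolution of the recursion for `π` dominates `F^π`: iterating the
inequality up to the first violation time `N` gives `γ ^ N ≤ V x`, and `F^π x = 0` if there is
no violation. -/
theorem Fcdf_le_of_super (f : X → U → X) (h : X → ℝ) {γ : ℝ} (hγ0 : 0 < γ) (π : X → U)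
    (V : X → ℝ) (hV0 : ∀ x, 0 ≤ V x) (hV1 : ∀ x, 0 < h x → 1 ≤ V x)
    (hV : ∀ x, h x ≤ 0 → γ * V (f x (π x)) ≤ V x) (x : X) : Fcdf f h γ π x ≤ V x := by
  by_cases hex : ∃ t, h (traj f π x t) > 0
  · obtain ⟨t, ht⟩ := hex
    induction t generalizing x with
    | zero =>
      have hx : 0 < h x := ht
      rw [Fcdf_of_pos f h γ π hx]
      exact hV1 x hx
    | succ t ih =>
      rcases lt_or_ge 0 (h x) with hx | hx
      · rw [Fcdf_of_pos f h γ π hx]; exact hV1 x hx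
      · rw [traj_succ'] at ht
        rw [Fcdf_of_nonpos f h γ π hx]
        exact (mul_le_mul_of_nonneg_left (ih _ ht) hγ0.le).trans (hV x hx)
  · rw [Fcdf, dif_neg hex]
    exact hV0 x

theorem Fstar_le (f : X → U → X) (h : X → ℝ) {γ : ℝ} (hγ0 : 0 < γ) (π : X → U) (x : X) :
    Fstar f h γ x ≤ Fcdf f h γ π x :=
  ciInf_le ⟨0, by rintro _ ⟨π, rfl⟩; exact Fcdf_nonneg f h hγ0 π x⟩ π

theorem Fstar_nonneg (f : X → U → X) (h : X → ℝ) {γ : ℝ} (hγ0 : 0 < γ) (x : X) :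
    0 ≤ Fstar f h γ x :=
  Real.iInf_nonneg fun π => Fcdf_nonneg f h hγ0 π x

/-- One step of policy improvement: at a safe state, playing `u` and then following `π` is never
better than the best stationary policy. -/
theorem Fstar_le_mul_Fcdf (f : X → U → X) (h : X → ℝ) {γ : ℝ} (hγ0 : 0 < γ) {x : X}
    (hx : h x ≤ 0) (π : X → U) (u : U) : Fstar f h γ x ≤ γ * Fcdf f h γ π (f x u) := by
  rcases le_total (Fcdf f h γ π x) (γ * Fcdf f h γ π (f x u)) with hle | hle
  · exact (Fstar_le f h hγ0 π x).trans hle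
  · have key : ∀ y, Fcdf f h γ (Function.update π x u) y ≤ Fcdf f h γ π y := by
      refine Fcdf_le_of_super f h hγ0 _ _ (Fcdf_nonneg f h hγ0 π)
        (fun y hy => (Fcdf_of_pos f h γ π hy).ge) fun y hy => ?_
      by_cases hyx : y = x
      · subst hyx
        simpa using hle
      · rw [Function.update_of_ne hyx]
        exact (Fcdf_of_nonpos f h γ π hy).ge
    refine (Fstar_le f h hγ0 (Function.update π x u) x).trans ?_
    rw [Fcdf_of_nonpos f h γ _ hx, Function.update_self]
    exact mul_le_mul_of_nonneg_left (key _) hγ0.le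

theorem Fstar_bellman [Nonempty U] (f : X → U → X) (h : X → ℝ) {γ : ℝ} (hγ0 : 0 < γ) (x : X) :
    Fstar f h γ x = cInd h x + (1 - cInd h x) * γ * ⨅ u : U, Fstar f h γ (f x u) := by
  rcases lt_or_ge 0 (h x) with hx | hx
  · simp [cInd, hx, Fstar, Fcdf_of_pos f h γ _ hx]
  · have hc : cInd h x = 0 := if_neg (not_lt.2 hx)
    rw [hc, sub_zero, one_mul, zero_add]
    apply le_antisymm
    · rw [← div_le_iff₀' hγ0]
      refine le_ciInf fun u => le_ciInf fun π => ?_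
      rw [div_le_iff₀' hγ0]
      exact Fstar_le_mul_Fcdf f h hγ0 hx π u
    · refine le_ciInf fun π => ?_
      rw [Fcdf_of_nonpos f h γ π hx]
      refine mul_le_mul_of_nonneg_left (le_trans ?_ (Fstar_le f h hγ0 π _)) hγ0.le
      exact ciInf_le (f := fun u => Fstar f h γ (f x u))
        ⟨0, by rintro _ ⟨u, rfl⟩; exact Fstar_nonneg f h hγ0 _⟩ (π x)

/-- One-sided contraction estimate for two solutions of the risky Bellman equation. -/
theorem bellman_le_add_pow [Nonempty U] (f : X → U → X) (h : X → ℝ) {γ : ℝ} (hγ0 : 0 < γ)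
    {F G : X → ℝ} (hF : ∀ x, F x ∈ Set.Icc (0 : ℝ) 1) (hG : ∀ x, G x ∈ Set.Icc (0 : ℝ) 1)
    (hFB : ∀ x, F x = cInd h x + (1 - cInd h x) * γ * ⨅ u : U, F (f x u))
    (hGB : ∀ x, G x = cInd h x + (1 - cInd h x) * γ * ⨅ u : U, G (f x u)) (n : ℕ) (x : X) :
    F x ≤ G x + γ ^ n := by
  induction n generalizing x with
  | zero => linarith [(hF x).2, (hG x).1, pow_zero γ]
  | succ n ih =>
    rcases lt_or_ge 0 (h x) with hx | hx
    · have hc : cInd h x = 1 := if_pos hx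
      have h1 := hFB x
      have h2 := hGB x
      rw [hc] at h1 h2
      have := pow_pos hγ0 (n + 1)
      linarith
    · have hc : cInd h x = 0 := if_neg (not_lt.2 hx)
      have h1 : (⨅ u : U, F (f x u)) - γ ^ n ≤ ⨅ u : U, G (f x u) := by
        refine le_ciInf fun u => ?_
        have h2 : (⨅ u : U, F (f x u)) ≤ F (f x u) :=
          ciInf_le ⟨0, by rintro _ ⟨u, rfl⟩; exact (hF _).1⟩ u
        linarith [ih (f x u)]
      rw [hFB x, hGB x, hc, pow_succ']
      nlinarith [mul_le_mul_of_nonneg_left h1 hγ0.le]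

/-- Risky Bellman equation, necessary and sufficient: a function
`F : X → [0,1]` satisfies the risky Bellman equation iff it is the optimal CDF. -/
theorem risky_bellman_iff [Nonempty U] (f : X → U → X) (h : X → ℝ) (γ : ℝ)
    (hγ0 : 0 < γ) (hγ1 : γ < 1) (F : X → ℝ)
    (hF : ∀ x, F x ∈ Set.Icc (0:ℝ) 1) :
    (∀ x : X, F x = cInd h x + (1 - cInd h x) * γ * ⨅ u : U, F (f x u)) ↔
      F = Fstar f h γ := by
  constructor
  · intro hB
    have hS : ∀ x, Fstar f h γ x ∈ Set.Icc (0 : ℝ) 1 := fun x =>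
      ⟨Fstar_nonneg f h hγ0 x,
        (Fstar_le f h hγ0 (fun _ => Classical.arbitrary U) x).trans
          (Fcdf_le_one f h hγ0 hγ1 _ x)⟩
    have hSB := Fstar_bellman (U := U) f h hγ0
    have lim : ∀ b : ℝ, Filter.Tendsto (fun n : ℕ => b + γ ^ n) Filter.atTop (nhds b) :=
      fun b => by
        simpa using (tendsto_pow_atTop_nhds_zero_of_lt_one hγ0.le hγ1).const_add b
    funext x
    apply le_antisymm
    · exact ge_of_tendsto' (lim _) fun n => bellman_le_add_pow f h hγ0 hF hS hB hSB n x
    · exact ge_of_tendsto' (lim _) fun n => bellman_le_add_pow f h hγ0 hS hF hSB hB n x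
  · rintro rfl
    exact Fstar_bellman f h hγ0
end
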